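/- Let (Q, 𝔫, k) be a commutative Noetherian local ring and I ⊆ Q a grade 3 perfect ideal of resolution format (1, m, m+n−1, n). If m ≥ 4 and n ≥ 2, then there exists a grade 3 perfect ideal of resolution format (1, m+1, m+n, n) that is linked to I. -/

import Mathlib

/-- An ideal `I` in a commutative Noetherian local ring `Q` has **resolution format**
`(1, m, m+n-1, n)` if the minimal free resolution of `Q/I` over `Q` is
`0 → Q^n → Q^{m+n-1} → Q^m → Q`, i.e. there is an exact complex of free modules of the
indicated ranks augmented by `Q → Q/I → 0`, which is minimal in the sense that each
differential maps into `𝔫` times the target (`𝔫` the maximal ideal).  Equivalently, the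
`i`-th entry of the format is the Betti number `dim_k Tor_i^Q(Q/I, k)`. -/
def HasResolutionFormat {Q : Type*} [CommRing Q] [IsLocalRing Q]
    (I : Ideal Q) (m n : ℕ) : Prop :=
  ∃ (d1 : (Fin m → Q) →ₗ[Q] Q)
    (d2 : (Fin (m + n - 1) → Q) →ₗ[Q] (Fin m → Q))
    (d3 : (Fin n → Q) →ₗ[Q] (Fin (m + n - 1) → Q)),
    LinearMap.range d1 = I ∧
    LinearMap.range d2 = LinearMap.ker d1 ∧
    LinearMap.range d3 = LinearMap.ker d2 ∧
    LinearMap.ker d3 = ⊥ ∧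
    I ≤ IsLocalRing.maximalIdeal Q ∧
    LinearMap.range d2 ≤ (IsLocalRing.maximalIdeal Q) • (⊤ : Submodule Q (Fin m → Q)) ∧
    LinearMap.range d3 ≤ (IsLocalRing.maximalIdeal Q) • (⊤ : Submodule Q (Fin (m + n - 1) → Q))

/-- `I` is a grade `3` perfect ideal of resolution format `(1, m, m+n-1, n)`:
`I` contains a `Q`-regular sequence of length `3`, one has `m ≥ 3` and `n ≥ 1`, and the
minimal free resolution of `Q/I` has the format `(1, m, m+n-1, n)` (in particular `Q/I`
has projective dimension `3` as a `Q`-module, since `n ≥ 1`). -/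
def IsGrade3PerfectOfFormat {Q : Type*} [CommRing Q] [IsLocalRing Q]
    (I : Ideal Q) (m n : ℕ) : Prop :=
  (∃ x y z : Q, x ∈ I ∧ y ∈ I ∧ z ∈ I ∧ RingTheory.Sequence.IsRegular Q [x, y, z]) ∧
  3 ≤ m ∧ 1 ≤ n ∧ HasResolutionFormat I m n

/-- `J` is **directly linked** to `I` if there is a `Q`-regular sequence `x₁, x₂, x₃` of
elements of `I` with `J = (x₁, x₂, x₃) : I`. -/
def DirectlyLinked {Q : Type*} [CommRing Q] (I J : Ideal Q) : Prop :=
  ∃ x y z : Q, x ∈ I ∧ y ∈ I ∧ z ∈ I ∧ RingTheory.Sequence.IsRegular Q [x, y, z] ∧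
    J = Submodule.colon (Ideal.span {x, y, z}) I

/-- `J` is **linked** to `I` if there is a finite chain of ideals
`I = J₀, J₁, …, J_r = J` in which `J_{i+1}` is directly linked to `J_i` for every `i`. -/
def Linked {Q : Type*} [CommRing Q] (I J : Ideal Q) : Prop :=
  Relation.ReflTransGen (fun A B => DirectlyLinked A B) I J

/-- `I` is **licci** if it is linked to an ideal generated by a `Q`-regular sequence of
length `3`, i.e. `I` is in the linkage class of a complete intersection ideal. -/
def Licci {Q : Type*} [CommRing Q] (I : Ideal Q) : Prop :=
  ∃ C : Ideal Q, Linked I C ∧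
    ∃ x y z : Q, RingTheory.Sequence.IsRegular Q [x, y, z] ∧ C = Ideal.span {x, y, z}



open IsLocalRing

def Reg3 {Q : Type*} [CommRing Q] (a b c : Q) : Prop :=
  (∀ x, a * x = 0 → x = 0) ∧ (∀ x y, b * x = a * y → ∃ z, x = a * z) ∧
  (∀ x y w, c * x = a * y + b * w → ∃ s t, x = a * s + b * t)

theorem mem_span2 {Q : Type*} [CommRing Q] (a b x : Q) :
    x ∈ Ideal.span {a, b} ↔ ∃ s t, x = a * s + b * t := by
  rw [Ideal.mem_span_pair]
  constructor
  · rintro ⟨s, t, h⟩; exact ⟨s, t, by rw [← h]; ring⟩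
  · rintro ⟨s, t, h⟩; exact ⟨s, t, by rw [h]; ring⟩

theorem mem_span3 {Q : Type*} [CommRing Q] (a b c x : Q) :
    x ∈ Ideal.span {a, b, c} ↔ ∃ s t r, x = a * s + b * t + c * r := by
  rw [Submodule.mem_span_triple]
  simp only [smul_eq_mul]
  constructor
  · rintro ⟨s, t, r, h⟩; exact ⟨s, t, r, by rw [← h]; ring⟩
  · rintro ⟨s, t, r, h⟩; exact ⟨s, t, r, by rw [h]; ring⟩

theorem reg3_iff {Q : Type*} [CommRing Q] [IsLocalRing Q] (a b c : Q)
    (ha : a ∈ maximalIdeal Q) (hb : b ∈ maximalIdeal Q) (hc : c ∈ maximalIdeal Q) :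
    RingTheory.Sequence.IsRegular Q [a, b, c] ↔ Reg3 a b c := by
  have h0 : RingTheory.Sequence.IsRegular Q [a, b, c] ↔
      RingTheory.Sequence.IsWeaklyRegular Q [a, b, c] := by
    constructor
    · exact fun h => h.toIsWeaklyRegular
    · intro h
      exact RingTheory.Sequence.IsRegular.of_isWeaklyRegular_of_mem_maximalIdeal Q (by
        intro r hr
        simp only [List.mem_cons, List.not_mem_nil, or_false] at hr
        rcases hr with rfl | rfl | rfl <;> assumption) h
  rw [h0, RingTheory.Sequence.isWeaklyRegular_iff_Fin]
  have e1 : (Ideal.ofList [a, b] : Ideal Q) = Ideal.span {a, b} := by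
    simp [Ideal.ofList, Set.insert_def]
  have key : ∀ (r : Q) (J : Ideal Q), IsSMulRegular (Q ⧸ (J • ⊤ : Submodule Q Q)) r ↔
      ∀ x, r * x ∈ J → x ∈ J := by
    intro r J
    rw [isSMulRegular_quotient_iff_mem_of_smul_mem]
    simp
  constructor
  · intro h
    have k0 := (key _ _).1 (h ⟨0, by simp⟩)
    have k1 := (key _ _).1 (h ⟨1, by simp⟩)
    have k2 := (key _ _).1 (h ⟨2, by simp⟩)
    simp [Ideal.mem_span_singleton] at k0 k1
    simp only [List.take, e1, mem_span2] at k2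
    refine ⟨k0, ?_, ?_⟩
    · intro x y hxy
      exact k1 x ⟨y, hxy⟩
    · intro x y w hx
      exact k2 x ⟨y, w, hx⟩
  · rintro ⟨k0, k1, k2⟩ ⟨i, hi⟩
    rw [key]
    simp only [List.length_cons, List.length_nil] at hi
    interval_cases i
    · simpa using k0
    · simp [Ideal.mem_span_singleton]
      rintro x ⟨y, hy⟩
      exact k1 x y hy
    · simp only [List.take, e1, mem_span2]
      rintro x ⟨s, t, h⟩
      exact k2 x s t h

theorem reg3_perm {Q : Type*} [CommRing Q] [IsNoetherianRing Q] [IsLocalRing Q] {a b c a' b' c' : Q}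
    (h : RingTheory.Sequence.IsRegular Q [a, b, c])
    (hp : List.Perm [a, b, c] [a', b', c']) : RingTheory.Sequence.IsRegular Q [a', b', c'] :=
  IsLocalRing.isRegular_of_perm h hp

/-- pigeonhole avoidance -/
theorem avoid {Q : Type*} [CommRing Q] [IsNoetherianRing Q] [IsLocalRing Q] (a b z x : Q)
    (hz : z ∈ maximalIdeal Q)
    (h : ∀ x y w, z * x = a * y + b * w → ∃ s t, x = a * s + b * t) :
    ∃ k : ℕ, ∀ r y w, (x + z ^ (k + 2)) * r = a * y + b * w → ∃ s t, r = a * s + b * t := by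
  classical
  let J : Ideal Q := Ideal.span {a, b}
  have hzJ : ∀ r, z * r ∈ J → r ∈ J := by
    intro r hr
    obtain ⟨y, w, h'⟩ := (mem_span2 _ _ _).1 hr
    exact (mem_span2 _ _ _).2 (h r y w h')
  by_contra hcon
  push Not at hcon
  have hbad : ∀ k : ℕ, ∃ P ∈ associatedPrimes Q (Q ⧸ J), x + z ^ (k + 2) ∈ P := by
    intro k
    obtain ⟨r, y, w, h1, h2⟩ := hcon k
    have hr : r ∉ J := by
      intro hr
      obtain ⟨s, t, h'⟩ := (mem_span2 _ _ _).1 hr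
      exact h2 s t h'
    have : (x + z ^ (k + 2)) ∈ ⋃ p ∈ associatedPrimes Q (Q ⧸ J), (p : Set Q) := by
      rw [biUnion_associatedPrimes_eq_zero_divisors]
      refine ⟨Ideal.Quotient.mk J r, ?_, ?_⟩
      · rwa [Ne, Ideal.Quotient.eq_zero_iff_mem]
      · rw [Algebra.smul_def]
        show Ideal.Quotient.mk J _ * Ideal.Quotient.mk J r = 0
        rw [← map_mul, Ideal.Quotient.eq_zero_iff_mem]
        exact (mem_span2 _ _ _).2 ⟨y, w, h1⟩
    simpa using this
  choose P hP hxP using hbad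
  have hfin : (associatedPrimes Q (Q ⧸ J)).Finite := associatedPrimes.finite Q (Q ⧸ J)
  have hinj : Function.Injective P := by
    have aux : ∀ k l, k < l → P k ≠ P l := by
      intro k l hkl he
      have hp : (P k).IsPrime := (hP k).1
      have h1 := hxP k
      have h2 := hxP l
      rw [← he] at h2
      have h3 := (P k).sub_mem h1 h2
      have h4 : x + z ^ (k + 2) - (x + z ^ (l + 2)) = z ^ (k + 2) * (1 - z ^ (l - k)) := by
        have : l + 2 = (k + 2) + (l - k) := by omega
        rw [this, pow_add]; ring
      rw [h4] at h3
      have hu : IsUnit (1 - z ^ (l - k)) := by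
        have : z ^ (l - k) ∈ maximalIdeal Q := Ideal.pow_mem_of_mem _ hz _ (by omega)
        by_contra hnu
        have := (maximalIdeal Q).add_mem ((mem_maximalIdeal _).2 hnu) this
        simp at this
      have h5 : z ∈ P k := by
        rcases hp.mem_or_mem h3 with h6 | h6
        · exact hp.mem_of_pow_mem _ h6
        · exact absurd (Ideal.eq_top_of_isUnit_mem _ h6 hu) hp.ne_top
      have h7 : z ∈ ⋃ p ∈ associatedPrimes Q (Q ⧸ J), (p : Set Q) :=
        Set.mem_biUnion (hP k) h5
      rw [biUnion_associatedPrimes_eq_zero_divisors] at h7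
      obtain ⟨q, hq, hq'⟩ := h7
      obtain ⟨r, rfl⟩ := Ideal.Quotient.mk_surjective q
      rw [Algebra.smul_def] at hq'
      have hq'' : Ideal.Quotient.mk J z * Ideal.Quotient.mk J r = 0 := hq'
      rw [← map_mul, Ideal.Quotient.eq_zero_iff_mem] at hq''
      exact hq (Ideal.Quotient.eq_zero_iff_mem.2 (hzJ r hq''))
    intro k l hkl
    by_contra hne
    rcases lt_or_gt_of_ne hne with h1 | h1
    · exact aux _ _ h1 hkl
    · exact aux _ _ h1 hkl.symm
  exact Set.infinite_of_injective_forall_mem hinj hP hfin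

structure Cx (Q : Type*) [CommRing Q] (m N n : ℕ) where
  d1 : (Fin m → Q) →ₗ[Q] Q
  d2 : (Fin N → Q) →ₗ[Q] (Fin m → Q)
  d3 : (Fin n → Q) →ₗ[Q] (Fin N → Q)
  z1 : ∀ w, d1 (d2 w) = 0
  e1 : ∀ v, d1 v = 0 → ∃ w, d2 w = v
  z2 : ∀ f, d2 (d3 f) = 0
  e2 : ∀ w, d2 w = 0 → ∃ f, d3 f = w
  inj : ∀ f, d3 f = 0 → f = 0

structure Hty {Q : Type*} [CommRing Q] {m N n : ℕ} (F : Cx Q m N n) (u : Fin m → Q) where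
  s1 : (Fin m → Q) →ₗ[Q] (Fin N → Q)
  s2 : (Fin N → Q) →ₗ[Q] (Fin n → Q)
  h1 : ∀ v, F.d2 (s1 v) = F.d1 u • v - F.d1 v • u
  h2 : ∀ w, F.d3 (s2 w) = F.d1 u • w - s1 (F.d2 w)

theorem Hty.h3 {Q : Type*} [CommRing Q] {m N n : ℕ} {F : Cx Q m N n} {u : Fin m → Q}
    (H : Hty F u) (f : Fin n → Q) : H.s2 (F.d3 f) = F.d1 u • f := by
  have h : F.d3 (H.s2 (F.d3 f) - F.d1 u • f) = 0 := by
    rw [map_sub, H.h2, F.z2]; simp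
  exact sub_eq_zero.1 (F.inj _ h)

theorem lift_free {Q M P : Type*} [CommRing Q] [AddCommGroup M] [Module Q M] [AddCommGroup P]
    [Module Q P] {m : ℕ} (f : M →ₗ[Q] P) (g : (Fin m → Q) →ₗ[Q] P)
    (h : ∀ v, ∃ w, f w = g v) : ∃ s : (Fin m → Q) →ₗ[Q] M, ∀ v, f (s v) = g v := by
  choose k hk using h
  refine ⟨(Pi.basisFun Q (Fin m)).constr Q (fun i => k (Pi.basisFun Q (Fin m) i)), ?_⟩
  intro v
  have : f ∘ₗ (Pi.basisFun Q (Fin m)).constr Q (fun i => k (Pi.basisFun Q (Fin m) i)) = g := by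
    apply (Pi.basisFun Q (Fin m)).ext
    intro i
    rw [LinearMap.comp_apply, Module.Basis.constr_basis, hk]
  rw [← this]; rfl

theorem Hty.exists {Q : Type*} [CommRing Q] {m N n : ℕ} (F : Cx Q m N n) (u : Fin m → Q) :
    Nonempty (Hty F u) := by
  obtain ⟨s1, h1⟩ := lift_free F.d2 (F.d1 u • LinearMap.id - F.d1.smulRight u) (by
    intro v
    apply F.e1
    simp [mul_comm])
  obtain ⟨s2, h2⟩ := lift_free F.d3 (F.d1 u • LinearMap.id - s1 ∘ₗ F.d2) (by
    intro w
    apply F.e2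
    simp [h1, F.z1])
  exact ⟨⟨s1, s2, fun v => by simpa using h1 v, fun w => by simpa using h2 w⟩⟩

def Hty.add {Q : Type*} [CommRing Q] {m N n : ℕ} {F : Cx Q m N n} {u v : Fin m → Q}
    (H : Hty F u) (K : Hty F v) : Hty F (u + v) where
  s1 := H.s1 + K.s1
  s2 := H.s2 + K.s2
  h1 := fun w => by
    simp only [LinearMap.add_apply, map_add, H.h1, K.h1, add_smul, smul_add]; abel
  h2 := fun w => by
    simp only [LinearMap.add_apply, map_add, H.h2, K.h2, add_smul]; abel

def Hty.smul {Q : Type*} [CommRing Q] {m N n : ℕ} {F : Cx Q m N n} {u : Fin m → Q}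
    (c : Q) (H : Hty F u) : Hty F (c • u) where
  s1 := c • H.s1
  s2 := c • H.s2
  h1 := fun w => by
    simp only [LinearMap.smul_apply, map_smul, H.h1, smul_sub, smul_smul, smul_eq_mul]
    rw [mul_comm c (F.d1 w)]
  h2 := fun w => by
    simp only [LinearMap.smul_apply, map_smul, H.h2, smul_sub, smul_smul, smul_eq_mul]

theorem double_link {Q : Type*} [CommRing Q] {m N n : ℕ} (F : Cx Q m N n)
    (u1 u2 u3 : Fin m → Q) (hreg : Reg3 (F.d1 u1) (F.d1 u2) (F.d1 u3)) (r : Q)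
    (hr : ∀ j, (∀ v, ∃ s t q, j * F.d1 v = F.d1 u1 * s + F.d1 u2 * t + F.d1 u3 * q) →
      ∃ s t q, r * j = F.d1 u1 * s + F.d1 u2 * t + F.d1 u3 * q) :
    ∃ v, r = F.d1 v := by
  obtain ⟨H2⟩ := Hty.exists F u2
  obtain ⟨H3⟩ := Hty.exists F u3
  obtain ⟨g1, g2, g3⟩ := hreg
  set x1 := F.d1 u1 with hx1
  set x2 := F.d1 u2 with hx2
  set x3 := F.d1 u3 with hx3
  let α2 := H2.s1 u1
  let α3 := H3.s2 α2
  have hd2 : F.d2 α2 = x2 • u1 - x1 • u2 := H2.h1 u1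
  have hd3 : F.d3 α3 = x3 • α2 - (x2 • H3.s1 u1 - x1 • H3.s1 u2) := by
    have := H3.h2 α2
    rw [hd2, map_sub, map_smul, map_smul] at this
    exact this
  have hα : ∀ i, ∃ s t q, r * α3 i = x1 * s + x2 * t + x3 * q := by
    intro i
    apply hr
    intro v
    obtain ⟨T⟩ := Hty.exists F v
    have h := T.h3 α3
    rw [hd3] at h
    simp only [map_sub, map_smul] at h
    have hi := congrFun h i
    simp only [Pi.sub_apply, Pi.smul_apply, smul_eq_mul] at hi
    refine ⟨T.s2 (H3.s1 u2) i, - T.s2 (H3.s1 u1) i, T.s2 α2 i, ?_⟩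
    linear_combination -hi
  choose f1 f2 f3 hf using hα
  have hf' : r • α3 = x1 • f1 + x2 • f2 + x3 • f3 := by
    ext i; simp [hf i]
  have hA := congrArg F.d3 hf'
  simp only [map_add, map_smul, hd3] at hA
  have hB : ∀ i, ∃ s t, (r • α2 - F.d3 f3) i = x1 * s + x2 * t := by
    intro i
    have hi := congrFun hA i
    simp only [Pi.sub_apply, Pi.add_apply, Pi.smul_apply, smul_eq_mul] at hi
    apply g3 _ (F.d3 f1 i - r * H3.s1 u2 i) (F.d3 f2 i + r * H3.s1 u1 i)
    simp only [Pi.sub_apply, Pi.smul_apply, smul_eq_mul]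
    linear_combination hi
  choose k1 k2 hk using hB
  have hk' : r • α2 - F.d3 f3 = x1 • k1 + x2 • k2 := by
    ext i; simp only [hk i]; simp
  have hC := congrArg F.d2 hk'
  simp only [map_add, map_sub, map_smul, hd2, F.z2] at hC
  have hD : ∀ i, ∃ s, (r • u1 - F.d2 k2) i = x1 * s := by
    intro i
    have hi := congrFun hC i
    simp only [Pi.sub_apply, Pi.add_apply, Pi.smul_apply, smul_eq_mul, Pi.zero_apply] at hi
    apply g2 _ (F.d2 k1 i + r * u2 i)
    simp only [Pi.sub_apply, Pi.smul_apply, smul_eq_mul]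
    linear_combination hi
  choose l hl using hD
  have hl' : r • u1 - F.d2 k2 = x1 • l := by
    ext i; simp only [hl i]; simp
  have hE := congrArg F.d1 hl'
  simp only [map_sub, map_smul, F.z1, smul_eq_mul, ← hx1] at hE
  refine ⟨l, ?_⟩
  have := g1 (r - F.d1 l) (by linear_combination hE)
  exact sub_eq_zero.1 this

theorem lin_mem {Q : Type*} [CommRing Q] [IsLocalRing Q] {N : ℕ} (l : (Fin N → Q) →ₗ[Q] Q)
    (w : Fin N → Q) (hw : ∀ i, w i ∈ maximalIdeal Q) : l w ∈ maximalIdeal Q := by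
  rw [LinearMap.pi_apply_eq_sum_univ l w]
  exact Ideal.sum_mem _ fun i _ => Ideal.mul_mem_right _ _ (hw i)

theorem matrix_contra {Q : Type*} [CommRing Q] [IsLocalRing Q] {k : ℕ} (hk : 1 ≤ k)
    (A C1 C2 : Matrix (Fin k) (Fin k) Q) (x1 x2 : Q)
    (g1 : ∀ x, x1 * x = 0 → x = 0) (g2 : ∀ x y, x2 * x = x1 * y → ∃ z, x = x1 * z)
    (hA : ∀ i j, A i j ∈ maximalIdeal Q) (h1 : C1 * A = x1 • 1) (h2 : C2 * A = x2 • 1) :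
    False := by
  have hpow : ∀ (l : ℕ) (x : Q), x1 ^ l * x = 0 → x = 0 := by
    intro l
    induction l with
    | zero => intro x hx; simpa using hx
    | succ l ih =>
      intro x hx
      exact g1 _ (ih _ (by rw [← hx]; ring))
  have hX : (x2 • C1 - x1 • C2) * A = 0 := by
    rw [sub_mul, Matrix.smul_mul, Matrix.smul_mul, h1, h2, smul_smul, smul_smul, mul_comm, sub_self]
  have hdet : C1.det * A.det = x1 ^ k := by
    rw [← Matrix.det_mul, h1, Matrix.det_smul]; simp
  have hX2 : A.det • (x2 • C1 - x1 • C2) = 0 := by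
    have : (x2 • C1 - x1 • C2) * A * A.adjugate = 0 := by rw [hX, zero_mul]
    rw [mul_assoc, Matrix.mul_adjugate, Matrix.mul_smul, mul_one] at this
    exact this
  have hX3 : ∀ i j, ∃ z, C1 i j = x1 * z := by
    intro i j
    apply g2 _ (C2 i j)
    have h := congrFun (congrFun hX2 i) j
    simp only [Matrix.smul_apply, Matrix.sub_apply, smul_eq_mul, Matrix.zero_apply] at h
    have := hpow k (x2 * C1 i j - x1 * C2 i j) (by rw [← hdet, mul_assoc, h, mul_zero])
    exact sub_eq_zero.1 this
  choose C' hC' using hX3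
  have h3 : ∑ j, C' ⟨0, hk⟩ j * A j ⟨0, hk⟩ = 1 := by
    have h := congrFun (congrFun h1 ⟨0, hk⟩) ⟨0, hk⟩
    rw [Matrix.mul_apply] at h
    simp only [hC', Matrix.smul_apply, Matrix.one_apply_eq, smul_eq_mul, mul_one] at h
    refine sub_eq_zero.1 (g1 _ ?_)
    rw [mul_sub, Finset.mul_sum, mul_one, sub_eq_zero, ← h]
    conv_rhs => rw [← h]
    exact Finset.sum_congr rfl fun j _ => by ring
  have h4 : (1 : Q) ∈ maximalIdeal Q := by
    rw [← h3]
    exact Ideal.sum_mem _ fun i _ => Ideal.mul_mem_left _ _ (hA _ _)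
  simp at h4

theorem not_surj {Q : Type*} [CommRing Q] [IsLocalRing Q] {m n' : ℕ} (hn : 1 ≤ n')
    (F : Cx Q m (m + n') (n' + 1))
    (hd3 : ∀ f i, F.d3 f i ∈ maximalIdeal Q) (v1 v2 : Fin m → Q)
    (g1 : ∀ x, F.d1 v1 * x = 0 → x = 0)
    (g2 : ∀ x y, F.d1 v2 * x = F.d1 v1 * y → ∃ z, x = F.d1 v1 * z)
    (B : (Fin (m + n') → Q) →ₗ[Q] (Fin m → Q))
    (hB : ∀ v, ∃ C : (Fin (m + n') → Q) →ₗ[Q] (Fin (n' + 1) → Q),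
      (∀ f, C (F.d3 f) = F.d1 v • f) ∧ ∀ w, B w = 0 → C w 0 = 0)
    (hBd : ∀ f : Fin (n' + 1) → Q, f 0 = 0 → B (F.d3 f) = 0) :
    ¬ Function.Surjective B := by
  intro hs
  obtain ⟨s, hs⟩ := lift_free B (LinearMap.id) (fun v => hs v)
  simp only [LinearMap.id_apply] at hs
  let L := LinearMap.ker B
  let π : (Fin (m + n') → Q) →ₗ[Q] L :=
    LinearMap.codRestrict L (LinearMap.id - s ∘ₗ B) (by intro w; simp [L, hs])
  have hπ : ∀ x : L, π x = x := by
    intro x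
    ext1
    have : B x = 0 := x.2
    simp [π, this]
  have hproj : Module.Projective Q L := Module.Projective.of_split L.subtype π (by
    ext1 x; exact hπ x)
  have hfin : Module.Finite Q L := Module.Finite.of_surjective π (fun x => ⟨x, hπ x⟩)
  have hfree : Module.Free Q L := Module.free_of_flat_of_isLocalRing
  let E : (Fin (m + n') → Q) ≃ₗ[Q] L × (Fin m → Q) :=
    LinearEquiv.ofLinearMap (π.prod B) (L.subtype.coprod s)
      (by
        apply LinearMap.ext
        rintro ⟨x, v⟩
        have hx : B x = 0 := x.2
        ext1
        · ext1
          simp [π, hx, hs]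
        · simp [hx, hs])
      (by
        apply LinearMap.ext
        intro w
        simp [π])
  have hrk : Module.finrank Q L = n' := by
    have := E.finrank_eq
    rw [Module.finrank_prod] at this
    simp at this
    omega
  let e : L ≃ₗ[Q] (Fin n' → Q) := LinearEquiv.ofFinrankEq _ _ (by simp [hrk])
  let ι : (Fin n' → Q) →ₗ[Q] (Fin (n' + 1) → Q) :=
    LinearMap.pi (Fin.cases 0 (fun i => LinearMap.proj i))
  have hι0 : ∀ x, ι x 0 = 0 := by intro x; simp [ι]
  have hιs : ∀ x i, ι x (Fin.succ i) = x i := by intro x i; simp [ι]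
  let ρ : (Fin (n' + 1) → Q) →ₗ[Q] (Fin n' → Q) := LinearMap.funLeft Q Q Fin.succ
  let A : (Fin n' → Q) →ₗ[Q] (Fin n' → Q) := e.toLinearMap ∘ₗ π ∘ₗ F.d3 ∘ₗ ι
  have hC : ∀ v, ∃ C : (Fin n' → Q) →ₗ[Q] (Fin n' → Q), C ∘ₗ A = F.d1 v • LinearMap.id := by
    intro v
    obtain ⟨C, hC1, hC2⟩ := hB v
    refine ⟨ρ ∘ₗ C ∘ₗ L.subtype ∘ₗ e.symm.toLinearMap, ?_⟩
    apply LinearMap.ext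
    intro x
    have hx : F.d3 (ι x) ∈ L := hBd _ (hι0 x)
    have hx' : π (F.d3 (ι x)) = ⟨F.d3 (ι x), hx⟩ := hπ ⟨_, hx⟩
    ext i
    simp [A, hx', hC1, ρ, hιs, LinearMap.funLeft_apply]
  obtain ⟨C1, hC1⟩ := hC v1
  obtain ⟨C2, hC2⟩ := hC v2
  refine matrix_contra hn (LinearMap.toMatrix' A) (LinearMap.toMatrix' C1) (LinearMap.toMatrix' C2)
    _ _ g1 g2 ?_ ?_ ?_
  · intro i j
    rw [LinearMap.toMatrix'_apply]
    exact lin_mem (LinearMap.proj i ∘ₗ e.toLinearMap ∘ₗ π) _ (hd3 _)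
  · rw [← LinearMap.toMatrix'_comp, hC1, map_smul, LinearMap.toMatrix'_id]
  · rw [← LinearMap.toMatrix'_comp, hC2, map_smul, LinearMap.toMatrix'_id]

theorem functional_of_not_surj {Q : Type*} [CommRing Q] [IsLocalRing Q] {m N : ℕ}
    (B : (Fin N → Q) →ₗ[Q] (Fin m → Q)) (hB : ¬ Function.Surjective B) :
    ∃ u : Fin m → Q, (∃ i, IsUnit (u i)) ∧ ∀ w, ∑ i, u i * B w i ∈ maximalIdeal Q := by
  classical
  let red : (Fin m → Q) → (Fin m → ResidueField Q) := fun v i => residue Q (v i)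
  let p : Submodule (ResidueField Q) (Fin m → ResidueField Q) :=
    { carrier := {y | ∃ w, red (B w) = y}
      add_mem' := by
        rintro _ _ ⟨w, rfl⟩ ⟨w', rfl⟩
        exact ⟨w + w', by ext i; simp [red]⟩
      zero_mem' := ⟨0, by ext i; simp [red]⟩
      smul_mem' := by
        rintro c _ ⟨w, rfl⟩
        obtain ⟨c, rfl⟩ := residue_surjective c
        exact ⟨c • w, by ext i; simp [red]⟩ }
  have hp : p < ⊤ := by
    rw [lt_top_iff_ne_top]
    intro htop
    apply hB
    rw [← LinearMap.range_eq_top, eq_top_iff]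
    apply Submodule.le_of_le_smul_of_le_jacobson_bot (I := maximalIdeal Q) Module.Finite.fg_top
      (maximalIdeal_le_jacobson _)
    intro v _
    have hv : red v ∈ p := by rw [htop]; trivial
    obtain ⟨w, hw⟩ := hv
    have hd : ∀ i, v i - B w i ∈ maximalIdeal Q := by
      intro i
      have := congrFun hw i
      simp only [red] at this
      rw [← residue_eq_zero_iff, map_sub, this, sub_self]
    rw [show v = B w + (v - B w) by abel]
    refine Submodule.add_mem_sup ⟨w, rfl⟩ ?_
    rw [pi_eq_sum_univ' (v - B w)]
    exact Submodule.sum_mem _ fun i _ => Submodule.smul_mem_smul (hd i) trivial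
  obtain ⟨f, hf, hfp⟩ := p.exists_le_ker_of_lt_top hp
  choose u hu using fun i => residue_surjective (R := Q) (f (Pi.single i 1))
  have hf' : ∀ y, f y = ∑ i, y i * residue Q (u i) := by
    intro y
    rw [LinearMap.pi_apply_eq_sum_univ f y]
    refine Finset.sum_congr rfl fun i _ => ?_
    rw [hu, smul_eq_mul]
    congr 2
    ext j; simp [Pi.single_apply, eq_comm]
  refine ⟨u, ?_, ?_⟩
  · by_contra hcon
    push Not at hcon
    apply hf
    apply LinearMap.ext
    intro y
    rw [hf']
    simp only [LinearMap.zero_apply]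
    refine Finset.sum_eq_zero fun i _ => ?_
    rw [(residue_eq_zero_iff _).2 ((mem_maximalIdeal _).2 (hcon i)), mul_zero]
  · intro w
    have h0 : f (red (B w)) = 0 := hfp ⟨w, rfl⟩
    rw [← residue_eq_zero_iff, map_sum, ← h0, hf']
    exact Finset.sum_congr rfl fun i _ => by simp [red, mul_comm]

theorem Hty.sum {Q : Type*} [CommRing Q] {m N n : ℕ} {F : Cx Q m N n}
    (H : ∀ i, Hty F (Pi.single i 1)) (u : Fin m → Q) :
    ∃ K : Hty F u, ∀ w, K.s2 w = ∑ i, u i • (H i).s2 w := by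
  have hu : u = ∑ i, u i • (Pi.single i 1 : Fin m → Q) := by
    ext j; simp [Finset.sum_apply, Pi.single_apply]
  have hd : F.d1 u = ∑ i, u i * F.d1 (Pi.single i 1) := by
    conv_lhs => rw [hu]
    simp
  refine ⟨⟨∑ i, u i • (H i).s1, ∑ i, u i • (H i).s2, ?_, ?_⟩, ?_⟩
  · intro v
    simp only [LinearMap.sum_apply, LinearMap.smul_apply, map_sum, map_smul, (H _).h1]
    conv_rhs => rw [hd]; rhs; rhs; rw [hu]
    rw [Finset.sum_smul, Finset.smul_sum, ← Finset.sum_sub_distrib]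
    refine Finset.sum_congr rfl fun i _ => ?_
    rw [smul_sub, smul_smul, smul_comm]
  · intro w
    simp only [LinearMap.sum_apply, LinearMap.smul_apply, map_sum, map_smul, (H _).h2]
    rw [hd, Finset.sum_smul, ← Finset.sum_sub_distrib]
    refine Finset.sum_congr rfl fun i _ => ?_
    rw [smul_sub, smul_smul]
  · intro w
    simp

theorem exists_u {Q : Type*} [CommRing Q] [IsLocalRing Q] {m n' : ℕ} (hn : 1 ≤ n')
    (F : Cx Q m (m + n') (n' + 1))
    (hd3 : ∀ f i, F.d3 f i ∈ maximalIdeal Q) (v1 v2 : Fin m → Q)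
    (g1 : ∀ x, F.d1 v1 * x = 0 → x = 0)
    (g2 : ∀ x y, F.d1 v2 * x = F.d1 v1 * y → ∃ z, x = F.d1 v1 * z) :
    ∃ (u : Fin m → Q) (H : Hty F u), (∃ i, IsUnit (u i)) ∧ ∀ w, H.s2 w 0 ∈ maximalIdeal Q := by
  let H : ∀ i, Hty F (Pi.single i 1) := fun i => (Hty.exists F _).some
  let B : (Fin (m + n') → Q) →ₗ[Q] (Fin m → Q) :=
    LinearMap.pi fun i => LinearMap.proj 0 ∘ₗ (H i).s2
  have hBa : ∀ w i, B w i = (H i).s2 w 0 := fun w i => rfl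
  have hns := not_surj hn F hd3 v1 v2 g1 g2 B (by
    intro v
    obtain ⟨K, hK⟩ := Hty.sum H v
    refine ⟨K.s2, K.h3, fun w hw => ?_⟩
    rw [hK]
    simp only [Finset.sum_apply, Pi.smul_apply, smul_eq_mul, ← hBa, hw, Pi.zero_apply, mul_zero,
      Finset.sum_const_zero]) (by
    intro f hf
    ext i
    rw [hBa, (H i).h3]
    simp [hf])
  obtain ⟨u, hu, hw⟩ := functional_of_not_surj B hns
  obtain ⟨K, hK⟩ := Hty.sum H u
  refine ⟨u, K, hu, fun w => ?_⟩
  have := hw w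
  simp only [hBa] at this
  rw [hK]
  simpa using this

theorem linked_aux {Q : Type*} [CommRing Q] [IsLocalRing Q] {m N n : ℕ} (F : Cx Q m N n)
    (hd1 : ∀ v, F.d1 v ∈ maximalIdeal Q)
    (u1 u2 uz : Fin m → Q) (hreg : Reg3 (F.d1 u1) (F.d1 u2) (F.d1 uz))
    (φ : (Fin m → Q) →ₗ[Q] Q) (hφm : ∀ v, φ v ∈ maximalIdeal Q)
    (hφ : ∀ w, ∃ p q, φ (F.d2 w) = F.d1 u1 * p + F.d1 u2 * q)
    (hc : ∀ r y w, φ uz * r = F.d1 u1 * y + F.d1 u2 * w → ∃ s t, r = F.d1 u1 * s + F.d1 u2 * t)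
    (J : Ideal Q) (hJ : ∀ x, x ∈ J ↔ ∃ α β v, x = F.d1 u1 * α + F.d1 u2 * β + φ v) :
    Linked (LinearMap.range F.d1) J := by
  set a1 := F.d1 u1 with ha1
  set a2 := F.d1 u2 with ha2
  set z := F.d1 uz with hz
  let A : Ideal Q := Ideal.span {a1, a2}
  let q := Ideal.Quotient.mk A
  have hq0 : ∀ x, q x = 0 ↔ ∃ s t, x = a1 * s + a2 * t := fun x =>
    Ideal.Quotient.eq_zero_iff_mem.trans (mem_span2 _ _ _)
  have nzd : ∀ y : Q, (∀ x, (∃ s t, y * x = a1 * s + a2 * t) → ∃ s t, x = a1 * s + a2 * t) →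
      ∀ x, q y * x = 0 → x = 0 := by
    intro y hy x hx
    obtain ⟨x, rfl⟩ := Ideal.Quotient.mk_surjective x
    exact (hq0 _).2 (hy x ((hq0 _).1 (by rw [map_mul]; exact hx)))
  have nz := nzd z (fun x ⟨s, t, h⟩ => hreg.2.2 x s t h)
  have nc := nzd (φ uz) (fun x ⟨s, t, h⟩ => hc x s t h)
  have hq3 : ∀ y x, x ∈ Ideal.span {a1, a2, y} ↔ ∃ r, q x = q y * r := by
    intro y x
    rw [mem_span3]
    constructor
    · rintro ⟨s, t, r, rfl⟩
      refine ⟨q r, ?_⟩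
      rw [map_add, (hq0 (a1 * s + a2 * t)).2 ⟨s, t, rfl⟩, zero_add, map_mul]
    · rintro ⟨r, hr⟩
      obtain ⟨r, rfl⟩ := Ideal.Quotient.mk_surjective r
      have h : q (x - y * r) = 0 := by rw [map_sub, map_mul, hr]; exact sub_self _
      obtain ⟨s, t, h⟩ := (hq0 _).1 h
      exact ⟨s, t, r, by linear_combination h⟩
  have star : ∀ v v', q (F.d1 v) * q (φ v') = q (F.d1 v') * q (φ v) := by
    intro v v'
    obtain ⟨w, hw⟩ := F.e1 (F.d1 v • v' - F.d1 v' • v) (by simp [mul_comm])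
    obtain ⟨p, r, h⟩ := hφ w
    rw [hw] at h
    have h0 := (hq0 _).2 ⟨p, r, h⟩
    simp only [map_sub, map_smul, smul_eq_mul, map_mul] at h0
    exact sub_eq_zero.1 h0
  let J1 : Ideal Q := Submodule.colon (Ideal.span {a1, a2, z}) (LinearMap.range F.d1 : Set Q)
  have hJ1 : ∀ j, j ∈ J1 ↔ ∀ v, ∃ r, q j * q (F.d1 v) = q z * r := by
    intro j
    rw [Submodule.mem_colon]
    constructor
    · intro h v
      obtain ⟨r, hr⟩ := (hq3 _ _).1 (h (F.d1 v) ⟨v, rfl⟩)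
      exact ⟨r, by rw [← hr, smul_eq_mul, map_mul]⟩
    · rintro h _ ⟨v, rfl⟩
      obtain ⟨r, hr⟩ := h v
      exact (hq3 _ _).2 ⟨r, by rw [← hr, smul_eq_mul, map_mul]⟩
  have l1 : DirectlyLinked (LinearMap.range F.d1) J1 :=
    ⟨a1, a2, z, ⟨u1, rfl⟩, ⟨u2, rfl⟩, ⟨uz, rfl⟩,
      (reg3_iff _ _ _ (hd1 _) (hd1 _) (hd1 _)).2 hreg, rfl⟩
  have qa1 : q a1 = 0 := (hq0 _).2 ⟨1, 0, by ring⟩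
  have qa2 : q a2 = 0 := (hq0 _).2 ⟨0, 1, by ring⟩
  have ja1 : a1 ∈ J1 := (hJ1 _).2 fun v => ⟨0, by rw [qa1]; ring⟩
  have ja2 : a2 ∈ J1 := (hJ1 _).2 fun v => ⟨0, by rw [qa2]; ring⟩
  have jz : z ∈ J1 := (hJ1 _).2 fun v => ⟨q (F.d1 v), rfl⟩
  have jc : φ uz ∈ J1 := (hJ1 _).2 fun v => ⟨q (φ v), by rw [mul_comm, star v uz]⟩
  have hdl : ∀ s, (∀ j ∈ J1, ∃ r, q s * q j = q z * r) → ∃ v, s = F.d1 v := by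
    intro s hs
    apply double_link F u1 u2 uz hreg
    intro j hj
    have hj1 : j ∈ J1 := (hJ1 _).2 fun v => by
      obtain ⟨r, hr⟩ := (hq3 z _).1 ((mem_span3 _ _ _ _).2 (hj v))
      exact ⟨r, by rw [← hr, map_mul]⟩
    obtain ⟨r, hr⟩ := hs j hj1
    exact (mem_span3 _ _ _ _).1 ((hq3 z _).2 ⟨r, by rw [map_mul, hr]⟩)
  have l2 : DirectlyLinked J1 J := by
    refine ⟨a1, a2, φ uz, ja1, ja2, jc,
      (reg3_iff _ _ _ (hd1 _) (hd1 _) (hφm _)).2 ⟨hreg.1, hreg.2.1, hc⟩, ?_⟩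
    ext x
    rw [hJ, Submodule.mem_colon]
    constructor
    · rintro ⟨α, β, v, rfl⟩ j hj
      rw [hq3]
      obtain ⟨s, hs⟩ := (hJ1 j).1 hj v
      refine ⟨s, ?_⟩
      have h1 := star v uz
      rw [smul_eq_mul, map_mul, map_add, map_add, map_mul, map_mul, qa1, qa2]
      refine sub_eq_zero.1 (nz _ ?_)
      change q (F.d1 v) * q (φ uz) = q z * q (φ v) at h1
      linear_combination q (φ uz) * hs - q j * h1
    · intro hx
      obtain ⟨s, hs⟩ := (hq3 _ _).1 (hx z jz)
      obtain ⟨s, rfl⟩ := Ideal.Quotient.mk_surjective s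
      rw [smul_eq_mul, map_mul] at hs
      change q x * q z = q (φ uz) * q s at hs
      obtain ⟨v, hv⟩ := hdl s (by
        intro j hj
        obtain ⟨t, ht⟩ := (hq3 _ _).1 (hx j hj)
        rw [smul_eq_mul, map_mul] at ht
        refine ⟨t, sub_eq_zero.1 (nc _ ?_)⟩
        linear_combination q z * ht - q j * hs)
      have h1 := star v uz
      change q (F.d1 v) * q (φ uz) = q z * q (φ v) at h1
      have h2 : q (x - φ v) = 0 := by
        apply nz
        rw [map_sub]
        rw [hv] at hs
        linear_combination hs + h1
      obtain ⟨s', t', h3⟩ := (hq0 _).1 h2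
      exact ⟨s', t', v, by linear_combination h3⟩
  exact Relation.ReflTransGen.head l1 (Relation.ReflTransGen.single l2)

theorem map_mem_smul_top {Q M P : Type*} [CommRing Q] [IsLocalRing Q] [AddCommGroup M]
    [AddCommGroup P] [Module Q M] [Module Q P]
    (f : M →ₗ[Q] P) (x : M) (hx : x ∈ maximalIdeal Q • (⊤ : Submodule Q M)) :
    f x ∈ maximalIdeal Q • (⊤ : Submodule Q P) := by
  have := Submodule.mem_map_of_mem (f := f) hx
  rw [Submodule.map_smul''] at this
  exact Submodule.smul_mono le_rfl le_top this

theorem pi_mem_smul_top {Q : Type*} [CommRing Q] [IsLocalRing Q] {m : ℕ} (v : Fin m → Q)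
    (hv : ∀ i, v i ∈ maximalIdeal Q) : v ∈ maximalIdeal Q • (⊤ : Submodule Q (Fin m → Q)) := by
  rw [pi_eq_sum_univ' v]
  exact Submodule.sum_mem _ fun i _ => Submodule.smul_mem_smul (hv i) trivial

theorem mem_of_smul_top {Q : Type*} [CommRing Q] [IsLocalRing Q] {m : ℕ} (v : Fin m → Q)
    (hv : v ∈ maximalIdeal Q • (⊤ : Submodule Q (Fin m → Q))) (i : Fin m) :
    v i ∈ maximalIdeal Q := by
  have := map_mem_smul_top (LinearMap.proj (R := Q) (φ := fun _ : Fin m => Q) i) v hv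
  simpa using this

theorem format_of {Q : Type*} [CommRing Q] [IsLocalRing Q] (I : Ideal Q) (m n : ℕ)
    {G1 G2 G3 : Type*} [AddCommGroup G1] [AddCommGroup G2] [AddCommGroup G3]
    [Module Q G1] [Module Q G2] [Module Q G3] [Module.Free Q G1] [Module.Free Q G2]
    [Module.Free Q G3] [Module.Finite Q G1] [Module.Finite Q G2] [Module.Finite Q G3]
    (r1 : Module.finrank Q G1 = m) (r2 : Module.finrank Q G2 = m + n - 1)
    (r3 : Module.finrank Q G3 = n)
    (D1 : G1 →ₗ[Q] Q) (D2 : G2 →ₗ[Q] G1) (D3 : G3 →ₗ[Q] G2)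
    (hI : LinearMap.range D1 = I) (hIm : I ≤ maximalIdeal Q)
    (z1 : ∀ w, D1 (D2 w) = 0) (e1 : ∀ v, D1 v = 0 → ∃ w, D2 w = v)
    (z2 : ∀ w, D2 (D3 w) = 0) (e2 : ∀ v, D2 v = 0 → ∃ w, D3 w = v)
    (inj : ∀ v, D3 v = 0 → v = 0)
    (m2 : ∀ w, D2 w ∈ maximalIdeal Q • (⊤ : Submodule Q G1))
    (m3 : ∀ w, D3 w ∈ maximalIdeal Q • (⊤ : Submodule Q G2)) :
    HasResolutionFormat I m n := by
  let E1 : G1 ≃ₗ[Q] (Fin m → Q) := LinearEquiv.ofFinrankEq _ _ (by simp [r1])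
  let E2 : G2 ≃ₗ[Q] (Fin (m + n - 1) → Q) := LinearEquiv.ofFinrankEq _ _ (by simp [r2])
  let E3 : G3 ≃ₗ[Q] (Fin n → Q) := LinearEquiv.ofFinrankEq _ _ (by simp [r3])
  refine ⟨D1 ∘ₗ E1.symm.toLinearMap, E1.toLinearMap ∘ₗ D2 ∘ₗ E2.symm.toLinearMap,
    E2.toLinearMap ∘ₗ D3 ∘ₗ E3.symm.toLinearMap, ?_, ?_, ?_, ?_, hIm, ?_, ?_⟩
  · rw [LinearMap.range_comp, LinearEquiv.range, Submodule.map_top, hI]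
  · ext v
    constructor
    · rintro ⟨w, rfl⟩
      simp [z1]
    · intro hv
      obtain ⟨w, hw⟩ := e1 (E1.symm v) (by simpa using hv)
      exact ⟨E2 w, by simp [hw]⟩
  · ext v
    constructor
    · rintro ⟨w, rfl⟩
      simp [z2]
    · intro hv
      obtain ⟨w, hw⟩ := e2 (E2.symm v) (by simpa using hv)
      exact ⟨E3 w, by simp [hw]⟩
  · rw [LinearMap.ker_eq_bot']
    intro v hv
    have := inj (E3.symm v) (by simpa using hv)
    simpa using this
  · rintro _ ⟨w, rfl⟩
    exact map_mem_smul_top E1.toLinearMap _ (m2 _)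
  · rintro _ ⟨w, rfl⟩
    exact map_mem_smul_top E2.toLinearMap _ (m3 _)

theorem split_u {Q : Type*} [CommRing Q] {k : ℕ} (u : Fin (k + 1) → Q) (i : Fin (k + 1))
    (hu : IsUnit (u i)) :
    ∃ (o : (Fin (k + 1) → Q) →ₗ[Q] Q) (π : (Fin (k + 1) → Q) →ₗ[Q] (Fin k → Q))
      (ι : (Fin k → Q) →ₗ[Q] (Fin (k + 1) → Q)), (∀ v, v = o v • u + ι (π v)) ∧
      o u = 1 ∧ π u = 0 ∧ (∀ x, o (ι x) = 0) ∧ ∀ x, π (ι x) = x := by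
  obtain ⟨c, hc⟩ := hu.exists_left_inv
  let o : (Fin (k + 1) → Q) →ₗ[Q] Q := c • LinearMap.proj i
  have ho : ∀ v, o v = c * v i := fun v => rfl
  let π : (Fin (k + 1) → Q) →ₗ[Q] (Fin k → Q) :=
    LinearMap.pi fun j => LinearMap.proj (i.succAbove j) - u (i.succAbove j) • o
  have hπ : ∀ v j, π v j = v (i.succAbove j) - u (i.succAbove j) * o v := fun v j => rfl
  let ι : (Fin k → Q) →ₗ[Q] (Fin (k + 1) → Q) :=
    LinearMap.pi (i.insertNth 0 (fun j => LinearMap.proj j))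
  have hι0 : ∀ x, ι x i = 0 := by intro x; simp [ι]
  have hι1 : ∀ x j, ι x (i.succAbove j) = x j := by intro x j; simp [ι]
  refine ⟨o, π, ι, ?_, hc, ?_, ?_, ?_⟩
  · intro v
    ext j
    rcases Fin.eq_self_or_eq_succAbove i j with rfl | ⟨j, rfl⟩
    · simp only [Pi.add_apply, Pi.smul_apply, smul_eq_mul, hι0, ho]
      linear_combination (- v j) * hc
    · simp only [Pi.add_apply, Pi.smul_apply, smul_eq_mul, hι1, hπ]
      ring
  · ext j
    simp [hπ, ho, hc]
  · intro x
    rw [ho, hι0, mul_zero]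
  · intro x
    ext j
    rw [hπ, hι1, ho, hι0, mul_zero, mul_zero, sub_zero]

set_option maxHeartbeats 2000000 in
theorem format_aux {Q : Type*} [CommRing Q] [IsLocalRing Q] {k N n' : ℕ}
    (F : Cx Q (k + 1) N (n' + 1)) (hN : N = k + 1 + n')
    (hd1 : ∀ v, F.d1 v ∈ maximalIdeal Q)
    (hd2 : ∀ w i, F.d2 w i ∈ maximalIdeal Q)
    (hd3 : ∀ f i, F.d3 f i ∈ maximalIdeal Q)
    (u1 u2 uz : Fin (k + 1) → Q) (hreg : Reg3 (F.d1 u1) (F.d1 u2) (F.d1 uz))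
    (i0 : Fin (k + 1)) (hi0 : IsUnit (u1 i0)) (hu2 : ∀ i, u2 i ∈ maximalIdeal Q)
    (h : Fin N → Q) (hh : F.d2 h = F.d1 u2 • u1 - F.d1 u1 • u2)
    (hhm : ∀ i, h i ∈ maximalIdeal Q)
    (φ : (Fin (k + 1) → Q) →ₗ[Q] Q) (hφm : ∀ v, φ v ∈ maximalIdeal Q)
    (p q : (Fin N → Q) →ₗ[Q] Q)
    (hpm : ∀ w, p w ∈ maximalIdeal Q) (hqm : ∀ w, q w ∈ maximalIdeal Q)
    (hφ : ∀ w, φ (F.d2 w) = F.d1 u1 * p w + F.d1 u2 * q w)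
    (hp3 : ∀ f, p (F.d3 f) = - (F.d1 u2 * f 0)) (hq3 : ∀ f, q (F.d3 f) = F.d1 u1 * f 0)
    (s' t' : Q) (hs' : s' ∈ maximalIdeal Q) (ht' : t' ∈ maximalIdeal Q)
    (hφ2 : φ u2 = F.d1 u1 * s' + F.d1 u2 * t')
    (hc : ∀ r y w, φ uz * r = F.d1 u1 * y + F.d1 u2 * w → ∃ s t, r = F.d1 u1 * s + F.d1 u2 * t)
    (J : Ideal Q) (hJ : ∀ x, x ∈ J ↔ ∃ α β v, x = F.d1 u1 * α + F.d1 u2 * β + φ v) :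
    HasResolutionFormat J (k + 2) (n' + 1) := by
  obtain ⟨o, π, ι, hv, ou, πu, oι, πι⟩ := split_u u1 i0 hi0
  obtain ⟨g1, g2, g3⟩ := hreg
  have mA : F.d1 u1 ∈ maximalIdeal Q := hd1 _
  set a1 := F.d1 u1 with ha1
  set a2 := F.d1 u2 with ha2
  set z := F.d1 uz with hz
  -- φ respects relations
  have star : ∀ v v', ∃ s t, F.d1 v * φ v' - F.d1 v' * φ v = a1 * s + a2 * t := by
    intro v v'
    obtain ⟨w, hw⟩ := F.e1 (F.d1 v • v' - F.d1 v' • v) (by simp [mul_comm])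
    have h := hφ w
    rw [hw] at h
    simp only [map_sub, map_smul, smul_eq_mul] at h
    exact ⟨_, _, h⟩
  obtain ⟨s, t, hφ1⟩ : ∃ s t, φ u1 = a1 * s + a2 * t := by
    obtain ⟨s, t, h⟩ := star u1 uz
    exact g3 _ (φ uz - s) (-t) (by linear_combination -h)
  have hinj : ∀ v, (∃ x y, φ v = a1 * x + a2 * y) → ∃ x y, F.d1 v = a1 * x + a2 * y := by
    rintro v ⟨x, y, hxy⟩
    obtain ⟨s, t, h⟩ := star v uz
    exact hc _ (s + z * x) (t + z * y) (by linear_combination h + z * hxy)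
  obtain ⟨κ, hκ1, hκ2⟩ : ∃ κ, p h + a1 * s' - a2 * s = a2 * κ ∧
      q h + a1 * t' - a2 * t = - (a1 * κ) := by
    have h0 : a1 * (p h + a1 * s' - a2 * s) + a2 * (q h + a1 * t' - a2 * t) = 0 := by
      have h1 := hφ h
      rw [hh] at h1
      simp only [map_sub, map_smul, smul_eq_mul] at h1
      linear_combination -h1 + a2 * hφ1 - a1 * hφ2
    obtain ⟨κ, hκ⟩ := g2 (q h + a1 * t' - a2 * t) (-(p h + a1 * s' - a2 * s))
      (by linear_combination h0)
    refine ⟨-κ, ?_, by linear_combination hκ⟩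
    refine sub_eq_zero.1 (g1 _ ?_)
    linear_combination h0 - a2 * hκ
  let ι3 : (Fin n' → Q) →ₗ[Q] (Fin (n' + 1) → Q) :=
    LinearMap.pi (Fin.cases 0 (fun i => LinearMap.proj i))
  have hι30 : ∀ x, ι3 x 0 = 0 := by intro x; simp [ι3]
  have hι3s : ∀ x i, ι3 x (Fin.succ i) = x i := by intro x i; simp [ι3]
  let e0 : Fin (n' + 1) → Q := Pi.single 0 1
  have he00 : e0 0 = 1 := by simp [e0]
  have he0s : ∀ i : Fin n', e0 (Fin.succ i) = 0 := by intro i; simp [e0]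
  have hf : ∀ f : Fin (n' + 1) → Q, f = ι3 (fun i => f i.succ) + f 0 • e0 := by
    intro f
    ext i
    refine Fin.cases ?_ (fun i => ?_) i
    · simp [hι30, he00]
    · simp [hι3s, he0s]
  -- the relation map to F1
  let U : ((Fin N → Q) × Q) →ₗ[Q] (Fin (k + 1) → Q) :=
    F.d2.coprod (LinearMap.toSpanSingleton Q _ u2)
  have hU : ∀ w γ, U (w, γ) = F.d2 w + γ • u2 := by intro w γ; simp [U]
  let P : ((Fin N → Q) × Q) →ₗ[Q] Q := p.coprod (LinearMap.toSpanSingleton Q _ s') - s • (o ∘ₗ U)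
  have hP : ∀ w γ, P (w, γ) = p w + γ * s' - s * o (U (w, γ)) := by intro w γ; simp [P]
  let R : ((Fin N → Q) × Q) →ₗ[Q] Q := q.coprod (LinearMap.toSpanSingleton Q _ t') - t • (o ∘ₗ U)
  have hR : ∀ w γ, R (w, γ) = q w + γ * t' - t * o (U (w, γ)) := by intro w γ; simp [R]
  let D1 : (Q × Q × (Fin k → Q)) →ₗ[Q] Q :=
    (LinearMap.toSpanSingleton Q _ a1).coprod
      ((LinearMap.toSpanSingleton Q _ a2).coprod (φ ∘ₗ ι))
  have hD1 : ∀ α β v, D1 (α, β, v) = a1 * α + a2 * β + φ (ι v) := by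
    intro α β v; simp [D1]; ring
  let D2 : ((Fin N → Q) × Q) →ₗ[Q] (Q × Q × (Fin k → Q)) := (-P).prod ((-R).prod (π ∘ₗ U))
  have hD2 : ∀ x, D2 x = (- P x, - R x, π (U x)) := fun x => rfl
  let D3 : ((Fin n' → Q) × Q) →ₗ[Q] ((Fin N → Q) × Q) :=
    ((F.d3 ∘ₗ ι3).coprod (LinearMap.toSpanSingleton Q _ (h + κ • F.d3 e0))).prod
      (a1 • LinearMap.snd Q _ _)
  have hD3 : ∀ f l, D3 (f, l) = (F.d3 (ι3 f + (l * κ) • e0) + l • h, a1 * l) := by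
    intro f l
    ext1
    · simp [D3, smul_smul]; abel
    · simp [D3]
  have hφU : ∀ w γ, φ (U (w, γ)) = a1 * (p w + γ * s') + a2 * (q w + γ * t') := by
    intro w γ
    rw [hU, map_add, map_smul, hφ, hφ2, smul_eq_mul]; ring
  have hφι : ∀ v, φ (ι (π v)) = φ v - o v * φ u1 := by
    intro v
    conv_rhs => lhs; rw [hv v]
    simp
  have hmem : ∀ v, (∀ i, v i ∈ maximalIdeal Q) → o v ∈ maximalIdeal Q := fun v => lin_mem o v
  have hUm : ∀ x i, U x i ∈ maximalIdeal Q := by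
    rintro ⟨w, γ⟩ i
    rw [hU]
    exact Ideal.add_mem _ (hd2 _ _) (Ideal.mul_mem_left _ _ (hu2 i))
  refine format_of (G1 := Q × Q × (Fin k → Q)) (G2 := (Fin N → Q) × Q) (G3 := (Fin n' → Q) × Q)
    J (k + 2) (n' + 1) ?_ ?_ ?_ D1 D2 D3 ?_ ?_ ?_ ?_ ?_ ?_ ?_ ?_ ?_
  · simp [Module.finrank_prod]; omega
  · simp [Module.finrank_prod]; omega
  · simp [Module.finrank_prod]
  · ext x
    rw [hJ]
    constructor
    · rintro ⟨⟨α, β, v⟩, rfl⟩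
      exact ⟨α, β, ι v, hD1 _ _ _⟩
    · rintro ⟨α, β, v, rfl⟩
      refine ⟨(α + o v * s, β + o v * t, π v), ?_⟩
      rw [hD1, hφι, hφ1]; ring
  · intro x hx
    obtain ⟨α, β, v, rfl⟩ := (hJ x).1 hx
    exact Ideal.add_mem _ (Ideal.add_mem _ (Ideal.mul_mem_right _ _ (hd1 _))
      (Ideal.mul_mem_right _ _ (hd1 _))) (hφm _)
  · rintro ⟨w, γ⟩
    rw [hD2, hD1, hφι, hφU, hφ1, hP, hR]; ring
  · rintro ⟨α, β, v⟩ h0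
    rw [hD1] at h0
    obtain ⟨x, y, hxy⟩ := hinj (ι v) ⟨-α, -β, by linear_combination h0⟩
    obtain ⟨w, hw⟩ := F.e1 (ι v - x • u1 - y • u2) (by
      simp only [map_sub, map_smul, smul_eq_mul]
      rw [hxy]; ring)
    have hUw : U (w, y) = ι v - x • u1 := by rw [hU, hw]; abel
    have hπU : π (U (w, y)) = v := by rw [hUw, map_sub, map_smul, πι, πu]; simp
    have hcx : a1 * (α + P (w, y)) + a2 * (β + R (w, y)) = 0 := by
      have h1 : D1 (D2 (w, y)) = 0 := by
        rw [hD2, hD1, hφι, hφU, hφ1, hP, hR]; ring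
      rw [hD2, hD1, hπU] at h1
      linear_combination h0 - h1
    obtain ⟨l, hl⟩ := g2 (β + R (w, y)) (-(α + P (w, y))) (by linear_combination hcx)
    have hl2 : α + P (w, y) = - (a2 * l) := by
      refine sub_eq_zero.1 (g1 _ ?_)
      linear_combination hcx - a2 * hl
    refine ⟨(w, y) + (F.d3 (-(l • e0)), 0), ?_⟩
    have hU3 : ∀ f, U (F.d3 f, 0) = 0 := by intro f; rw [hU, F.z2]; simp
    rw [hD2, map_add, map_add, map_add, hU3, hP, hP (F.d3 _), hR, hR (F.d3 _), hU3, hp3, hq3]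
    rw [hP] at hl2
    rw [hR] at hl
    simp only [map_zero, add_zero, hπU, Pi.neg_apply, Pi.smul_apply, he00, smul_eq_mul]
    refine Prod.ext ?_ (Prod.ext ?_ rfl)
    · linear_combination -hl2
    · linear_combination -hl
  · rintro ⟨f, l⟩
    have hUD : U (D3 (f, l)) = (l * a2) • u1 := by
      rw [hD3, hU, map_add, F.z2, map_smul, hh]
      simp only [smul_sub, smul_smul, zero_add]
      rw [mul_comm l a1]; abel
    rw [hD2, hD3, hP, hR, ← hD3, hUD, map_smul, map_smul, ou, πu]
    simp only [map_add, hp3, hq3, map_smul, smul_eq_mul, Pi.add_apply, hι30, Pi.smul_apply, he00,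
      smul_zero]
    refine Prod.ext ?_ (Prod.ext ?_ rfl)
    · show _ = (0 : Q)
      linear_combination -l * hκ1
    · show _ = (0 : Q)
      linear_combination -l * hκ2
  · rintro ⟨w, γ⟩ h0
    rw [hD2] at h0
    have c1 : P (w, γ) = 0 := by simpa using congrArg Prod.fst h0
    have c2 : R (w, γ) = 0 := by simpa using congrArg (fun x => x.2.1) h0
    have c3 : π (U (w, γ)) = 0 := congrArg (fun x => x.2.2) h0
    have hUo := hv (U (w, γ))
    rw [c3, map_zero, add_zero] at hUo
    rw [hP] at c1
    rw [hR] at c2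
    set u0 := o (U (w, γ)) with hu0
    rw [hU] at hUo
    have h1 := congrArg F.d1 hUo
    rw [map_add, F.z1, map_smul, map_smul, zero_add, smul_eq_mul, smul_eq_mul, ← ha1, ← ha2] at h1
    obtain ⟨l, hl⟩ := g2 γ u0 (by linear_combination h1)
    have hl2 : u0 = a2 * l := by
      refine sub_eq_zero.1 (g1 _ ?_)
      linear_combination -h1 + a2 * hl
    obtain ⟨f, hf3⟩ := F.e2 (w - l • h) (by
      rw [map_sub, map_smul, hh, eq_sub_of_add_eq hUo, hl2, hl]
      simp only [smul_sub, smul_smul]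
      rw [mul_comm a2, mul_comm a1]; abel)
    have hw : w = l • h + F.d3 f := by rw [hf3]; abel
    have hfl : f 0 = l * κ := by
      refine sub_eq_zero.1 (g1 _ ?_)
      rw [hw, map_add, map_smul, hq3, smul_eq_mul, hl, hl2] at c2
      linear_combination c2 - l * hκ2
    refine ⟨(fun i => f i.succ, l), ?_⟩
    rw [hD3, ← hfl, ← hf f, hw, hl, add_comm]
  · rintro ⟨f, l⟩ h0
    rw [hD3] at h0
    have h1 : l = 0 := g1 _ (congrArg Prod.snd h0)
    have h2 := congrArg Prod.fst h0
    subst h1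
    simp only [zero_mul, zero_smul, add_zero, Prod.fst_zero] at h2
    have h3 := F.inj _ h2
    refine Prod.ext ?_ rfl
    ext i
    have := congrFun h3 i.succ
    rw [hι3s] at this
    simpa using this
  · rintro ⟨w, γ⟩
    rw [hD2]
    have mP : P (w, γ) ∈ maximalIdeal Q := by
      rw [hP]
      exact Ideal.sub_mem _ (Ideal.add_mem _ (hpm _) (Ideal.mul_mem_left _ _ hs'))
        (Ideal.mul_mem_left _ _ (hmem _ (hUm _)))
    have mR : R (w, γ) ∈ maximalIdeal Q := by
      rw [hR]
      exact Ideal.sub_mem _ (Ideal.add_mem _ (hqm _) (Ideal.mul_mem_left _ _ ht'))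
        (Ideal.mul_mem_left _ _ (hmem _ (hUm _)))
    have mU := map_mem_smul_top ((LinearMap.inr Q Q (Q × (Fin k → Q))) ∘ₗ LinearMap.inr Q Q _ ∘ₗ π)
      _ (pi_mem_smul_top _ (hUm (w, γ)))
    have e : ((- P (w, γ), - R (w, γ), π (U (w, γ))) : Q × Q × (Fin k → Q)) =
      (-P (w, γ)) • (1, 0, 0) + (- R (w, γ)) • (0, 1, 0) +
        ((LinearMap.inr Q Q (Q × (Fin k → Q))) ∘ₗ LinearMap.inr Q Q _ ∘ₗ π) (U (w, γ)) := by
      simp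
    rw [e]
    exact Submodule.add_mem _ (Submodule.add_mem _
      (Submodule.smul_mem_smul (Ideal.neg_mem_iff _ |>.2 mP) trivial)
      (Submodule.smul_mem_smul (Ideal.neg_mem_iff _ |>.2 mR) trivial)) mU
  · rintro ⟨f, l⟩
    rw [hD3]
    have m1 : ∀ i, (F.d3 (ι3 f + (l * κ) • e0) + l • h) i ∈ maximalIdeal Q := fun i =>
      Ideal.add_mem _ (hd3 _ _) (Ideal.mul_mem_left _ _ (hhm i))
    have m2 := map_mem_smul_top (LinearMap.inl Q _ Q) _ (pi_mem_smul_top _ m1)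
    have e : ((F.d3 (ι3 f + (l * κ) • e0) + l • h, a1 * l) : (Fin N → Q) × Q) =
        (LinearMap.inl Q _ Q) (F.d3 (ι3 f + (l * κ) • e0) + l • h) + (a1 * l) • (0, 1) := by
      simp
    rw [e]
    exact Submodule.add_mem _ m2 (Submodule.smul_mem_smul (Ideal.mul_mem_right _ _ mA) trivial)

theorem core {Q : Type*} [CommRing Q] [IsNoetherianRing Q] [IsLocalRing Q] {k n' : ℕ}
    (hn : 1 ≤ n') (F : Cx Q (k + 1) (k + 1 + n') (n' + 1))
    (hd1 : ∀ v, F.d1 v ∈ maximalIdeal Q)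
    (hd2 : ∀ w i, F.d2 w i ∈ maximalIdeal Q)
    (hd3 : ∀ f i, F.d3 f i ∈ maximalIdeal Q)
    (ux ub uz : Fin (k + 1) → Q)
    (hreg : RingTheory.Sequence.IsRegular Q [F.d1 ux, F.d1 ub, F.d1 uz]) :
    ∃ J : Ideal Q, (∃ x y z : Q, x ∈ J ∧ y ∈ J ∧ z ∈ J ∧
      RingTheory.Sequence.IsRegular Q [x, y, z]) ∧ HasResolutionFormat J (k + 2) (n' + 1) ∧
      Linked (LinearMap.range F.d1) J := by
  have r0 := (reg3_iff _ _ _ (hd1 _) (hd1 _) (hd1 _)).1 hreg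
  obtain ⟨u, H0, ⟨i0, hi0⟩, hH0⟩ := exists_u hn F hd3 ux ub r0.1 r0.2.1
  obtain ⟨Hx⟩ := Hty.exists F ux
  obtain ⟨T⟩ := Hty.exists F ub
  have hperm : RingTheory.Sequence.IsRegular Q [F.d1 ub, F.d1 uz, F.d1 ux] :=
    reg3_perm hreg (by
      exact (List.Perm.swap _ _ _).trans (List.Perm.cons _ (List.Perm.swap _ _ _)))
  have r1 := (reg3_iff _ _ _ (hd1 _) (hd1 _) (hd1 _)).1 hperm
  obtain ⟨l, hl⟩ := avoid (F.d1 ub) (F.d1 uz) (F.d1 ux) (F.d1 u) (hd1 _) r1.2.2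
  let e := (F.d1 ux) ^ (l + 1)
  have he : e ∈ maximalIdeal Q := Ideal.pow_mem_of_mem _ (hd1 _) _ (by omega)
  obtain ⟨u1, hu1⟩ : ∃ u1, u1 = u + e • ux := ⟨_, rfl⟩
  obtain ⟨H, hH⟩ : ∃ H : Hty F u1, ∀ w, H.s2 w 0 ∈ maximalIdeal Q := by
    subst hu1
    refine ⟨H0.add (Hty.smul e Hx), fun w => ?_⟩
    exact Ideal.add_mem _ (hH0 w) (Ideal.mul_mem_right _ _ he)
  have hi1 : IsUnit (u1 i0) := by
    by_contra hcon
    have h1 : u1 i0 ∈ maximalIdeal Q := (mem_maximalIdeal _).2 hcon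
    have h2 : u i0 ∈ maximalIdeal Q := by
      have : u i0 = u1 i0 - e * ux i0 := by rw [hu1]; simp
      rw [this]
      exact Ideal.sub_mem _ h1 (Ideal.mul_mem_right _ _ he)
    exact (mem_maximalIdeal _).1 h2 hi0
  have ha1 : F.d1 u1 = F.d1 u + (F.d1 ux) ^ (l + 2) := by
    rw [hu1, map_add, map_smul, smul_eq_mul]; simp only [e]; ring
  rw [← ha1] at hl
  have r2 : Reg3 (F.d1 ub) (F.d1 uz) (F.d1 u1) := ⟨r1.1, r1.2.1, hl⟩
  have r3 := reg3_perm (a' := F.d1 u1) (b' := F.d1 uz) (c' := F.d1 ub)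
    ((reg3_iff _ _ _ (hd1 _) (hd1 _) (hd1 _)).2 r2)
    (by
      refine (List.Perm.cons _ (List.Perm.swap _ _ _)).trans ?_
      refine (List.Perm.swap _ _ _).trans ?_
      exact List.Perm.cons _ (List.Perm.swap _ _ _))
  have r4 := (reg3_iff _ _ _ (hd1 _) (hd1 _) (hd1 _)).1 r3
  obtain ⟨b, hb⟩ : ∃ b, b = F.d1 ub := ⟨_, rfl⟩
  obtain ⟨a, ha⟩ : ∃ a, a = F.d1 u1 := ⟨_, rfl⟩
  obtain ⟨z, hz⟩ : ∃ z, z = F.d1 uz := ⟨_, rfl⟩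
  have mb : b ∈ maximalIdeal Q := hb ▸ hd1 _
  have ma : a ∈ maximalIdeal Q := ha ▸ hd1 _
  have mz : z ∈ maximalIdeal Q := hz ▸ hd1 _
  have mbb : b * b ∈ maximalIdeal Q := Ideal.mul_mem_right _ _ mb
  rw [← ha, ← hb, ← hz] at r4
  have r5 : Reg3 a z (b * b) := by
    refine ⟨r4.1, r4.2.1, fun x y w hx => ?_⟩
    obtain ⟨s, t, h⟩ := r4.2.2 (b * x) y w (by rw [← hx]; ring)
    exact r4.2.2 x s t h
  have r6 : Reg3 a (b * b) z :=
    (reg3_iff _ _ _ ma mbb mz).1 (reg3_perm ((reg3_iff _ _ _ ma mz mbb).2 r5)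
      (List.Perm.cons _ (List.Perm.swap _ _ _)))
  obtain ⟨l2, hl2⟩ := avoid a (b * b) z (b * (H.s2 (T.s1 uz) 0)) mz r6.2.2
  obtain ⟨c, hc⟩ : ∃ c, c = z ^ (l2 + 1) := ⟨_, rfl⟩
  have mc : c ∈ maximalIdeal Q := by
    rw [hc]; exact Ideal.pow_mem_of_mem _ mz _ (by omega)
  obtain ⟨φ, hφ⟩ : ∃ φ : (Fin (k + 1) → Q) →ₗ[Q] Q,
      ∀ v, φ v = b * (H.s2 (T.s1 v) 0) + c * F.d1 v :=
    ⟨b • (LinearMap.proj 0 ∘ₗ H.s2 ∘ₗ T.s1) + c • F.d1, fun v => rfl⟩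
  obtain ⟨p, hp⟩ : ∃ p : (Fin (k + 1 + n') → Q) →ₗ[Q] Q, ∀ w, p w = - b * (T.s2 w 0) :=
    ⟨(-b) • (LinearMap.proj 0 ∘ₗ T.s2), fun v => rfl⟩
  obtain ⟨q, hq⟩ : ∃ q : (Fin (k + 1 + n') → Q) →ₗ[Q] Q, ∀ w, q w = H.s2 w 0 :=
    ⟨(LinearMap.proj 0 ∘ₗ H.s2), fun v => rfl⟩
  have hφz : φ uz = b * (H.s2 (T.s1 uz) 0) + z ^ (l2 + 2) := by
    rw [hφ, hc, ← hz]; ring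
  rw [← hφz] at hl2
  have hφm : ∀ v, φ v ∈ maximalIdeal Q := fun v => by
    rw [hφ]; exact Ideal.add_mem _ (Ideal.mul_mem_right _ _ mb) (Ideal.mul_mem_right _ _ mc)
  have hu2 : F.d1 (b • ub) = b * b := by rw [map_smul, smul_eq_mul, ← hb]
  have hφd : ∀ w, φ (F.d2 w) = a * p w + b * b * q w := by
    intro w
    have h1 : T.s1 (F.d2 w) = b • w - F.d3 (T.s2 w) := by rw [T.h2, hb]; abel
    rw [hφ, F.z1, h1, map_sub, H.h3, map_smul, hp, hq, ← ha]
    simp only [Pi.sub_apply, Pi.smul_apply, smul_eq_mul]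
    ring
  obtain ⟨g, hg⟩ := F.e2 (T.s1 ub) (by rw [T.h1]; simp)
  let J : Ideal Q := Ideal.span {a, b * b} ⊔ LinearMap.range φ
  have hJ : ∀ x, x ∈ J ↔ ∃ α β v, x = a * α + b * b * β + φ v := by
    intro x
    constructor
    · intro hx
      obtain ⟨y, hy, w, ⟨v, rfl⟩, rfl⟩ := Submodule.mem_sup.1 hx
      obtain ⟨s, t, rfl⟩ := (mem_span2 _ _ _).1 hy
      exact ⟨s, t, v, rfl⟩
    · rintro ⟨α, β, v, rfl⟩
      exact Submodule.add_mem_sup ((mem_span2 _ _ _).2 ⟨α, β, rfl⟩) ⟨v, rfl⟩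
  refine ⟨J, ⟨a, b * b, φ uz, (hJ _).2 ⟨1, 0, 0, by simp⟩, (hJ _).2 ⟨0, 1, 0, by simp⟩,
    (hJ _).2 ⟨0, 0, uz, by simp⟩, (reg3_iff _ _ _ ma mbb (hφm _)).2 ⟨r6.1, r6.2.1, hl2⟩⟩, ?_, ?_⟩
  · refine format_aux F rfl hd1 hd2 hd3 u1 (b • ub) uz ?_ i0 hi1 ?_ (b • T.s1 u1) ?_ ?_ φ hφm p q
      ?_ ?_ ?_ ?_ ?_ (b * b * g 0) c ?_ mc ?_ ?_ J ?_
    · rw [hu2, ← ha, ← hz]; exact r6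
    · intro i; exact Ideal.mul_mem_right _ _ mb
    · rw [hu2, map_smul, T.h1, ← ha, ← hb, smul_sub, smul_smul, smul_smul, smul_smul, mul_comm a b]
    · intro i; exact Ideal.mul_mem_right _ _ mb
    · intro w; rw [hp]; exact Ideal.mul_mem_right _ _ (neg_mem mb)
    · intro w; rw [hq]; exact hH w
    · rw [hu2, ← ha]; exact hφd
    · intro f
      rw [hp, T.h3, hu2, ← hb]
      simp only [Pi.smul_apply, smul_eq_mul]; ring
    · intro f
      rw [hq, H.h3, ← ha]
      simp only [Pi.smul_apply, smul_eq_mul]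
    · exact Ideal.mul_mem_right _ _ mbb
    · rw [map_smul, hφ, ← hg, H.h3, hu2, ← ha, ← hb]
      simp only [Pi.smul_apply, smul_eq_mul]; ring
    · rw [hu2, ← ha]; exact hl2
    · rw [hu2, ← ha]; exact hJ
  · refine linked_aux F hd1 u1 (b • ub) uz ?_ φ hφm ?_ ?_ J ?_
    · rw [hu2, ← ha, ← hz]; exact r6
    · rw [hu2, ← ha]; exact fun w => ⟨_, _, hφd w⟩
    · rw [hu2, ← ha]; exact hl2
    · rw [hu2, ← ha]; exact hJ

/-- **Corollary 1.3(c).** Let `Q` be a commutative Noetherian local ring and `I ⊆ Q` a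
grade `3` perfect ideal of resolution format `(1, m, m+n-1, n)`.  If `m ≥ 4` and
`n ≥ 2`, then there exists a grade `3` perfect ideal of resolution format
`(1, m+1, m+n, n)` that is linked to `I`. -/
theorem stmt_6 (Q : Type*) [CommRing Q] [IsNoetherianRing Q] [IsLocalRing Q]
    (I : Ideal Q) (m n : ℕ) (hI : IsGrade3PerfectOfFormat I m n)
    (hm : 4 ≤ m) (hn : 2 ≤ n) :
    ∃ J : Ideal Q, IsGrade3PerfectOfFormat J (m + 1) n ∧ Linked I J := by
  obtain ⟨⟨x, y, z, hx, hy, hz, hreg⟩, -, -, d1, d2, d3, h1, h2, h3, h4, h5, h6, h7⟩ := hI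
  obtain ⟨k, rfl⟩ : ∃ k, m = k + 1 := ⟨m - 1, by omega⟩
  obtain ⟨n', rfl⟩ : ∃ n', n = n' + 1 := ⟨n - 1, by omega⟩
  let F : Cx Q (k + 1) (k + 1 + n') (n' + 1) :=
    { d1 := d1
      d2 := d2
      d3 := d3
      z1 := fun w => LinearMap.mem_ker.1 (h2 ▸ LinearMap.mem_range_self d2 w)
      e1 := fun v hv => by
        have : v ∈ LinearMap.range d2 := by rw [h2]; exact hv
        exact this
      z2 := fun w => LinearMap.mem_ker.1 (h3 ▸ LinearMap.mem_range_self d3 w)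
      e2 := fun v hv => by
        have : v ∈ LinearMap.range d3 := by rw [h3]; exact hv
        exact this
      inj := fun f hf => by
        have : f ∈ LinearMap.ker d3 := hf
        rw [h4] at this
        exact this }
  subst h1
  obtain ⟨ux, rfl⟩ := hx
  obtain ⟨uy, rfl⟩ := hy
  obtain ⟨uz, rfl⟩ := hz
  obtain ⟨J, hJ1, hJ2, hJ3⟩ := core (by omega) F (fun v => h5 ⟨v, rfl⟩)
    (fun w i => mem_of_smul_top _ (h6 ⟨w, rfl⟩) i)
    (fun w i => mem_of_smul_top _ (h7 ⟨w, rfl⟩) i) ux uy uz hreg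
  exact ⟨J, ⟨hJ1, by omega, by omega, hJ2⟩, hJ3⟩
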